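/- Let F ∈ ℝ^{m×n} and ρ > 0. There exists a matrix G ∈ ℝ^{n×n} such that the block matrix [[ρ·Iₘ, F·Gᵀ],[G·Fᵀ, G + Gᵀ − Iₙ]] is positive semidefinite if and only if Fᵀ·F ⪯ ρ·Iₙ (equivalently, F·Fᵀ ⪯ ρ·Iₘ); in the forward direction one may take G = Iₙ. -/

import Mathlib

open Matrix

/-!
Multiplying the block matrix by `[1, -F]` on the left and by its adjoint on the right makes every
occurrence of `G` cancel and leaves `ρ - F Fᴴ`. Conversely, at `G = 1` the block matrix is
`[1; 0] (ρ - F Fᴴ) [1; 0]ᴴ + [F; 1] [F; 1]ᴴ`. The two Gram conditions are equivalent because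
`ρ (ρ - F Fᴴ) = (ρ - F Fᴴ)² + F (ρ - Fᴴ F) Fᴴ`.
-/

section SlackBlock

variable {m n R : Type*} [Fintype n] [Ring R] [StarRing R]

theorem fromCols_one_neg_mul_fromBlocks_mul_conjTranspose [Fintype m] [DecidableEq m]
    (A : Matrix m m R) (F : Matrix m n R) (P G : Matrix n n R) :
    fromCols (1 : Matrix m m R) (-F) * fromBlocks A (F * Gᴴ) (G * Fᴴ) (G + Gᴴ - P) *
      (fromCols (1 : Matrix m m R) (-F))ᴴ = A - F * P * Fᴴ := by
  rw [conjTranspose_fromCols_eq_fromRows_conjTranspose, fromCols_mul_fromBlocks,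
    fromCols_mul_fromRows]
  simp only [conjTranspose_one, conjTranspose_neg, Matrix.one_mul, Matrix.mul_one, Matrix.neg_mul,
    Matrix.mul_neg, Matrix.mul_add, Matrix.add_mul, Matrix.mul_sub, Matrix.sub_mul,
    Matrix.mul_assoc]
  abel

theorem fromRows_mul_mul_conjTranspose_fromRows {l : Type*} (X : Matrix l n R) (Y : Matrix m n R)
    (M : Matrix n n R) :
    fromRows X Y * M * (fromRows X Y)ᴴ =
      fromBlocks (X * M * Xᴴ) (X * M * Yᴴ) (Y * M * Xᴴ) (Y * M * Yᴴ) := by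
  rw [conjTranspose_fromRows_eq_fromCols_conjTranspose, fromRows_mul, fromRows_mul_fromCols]

theorem fromBlocks_eq_fromRows_conj_add_fromRows_conj [Fintype m] [DecidableEq m] [DecidableEq n]
    (A : Matrix m m R) (F : Matrix m n R) (P : Matrix n n R) :
    fromBlocks A (F * P) (P * Fᴴ) P =
      fromRows (1 : Matrix m m R) (0 : Matrix n m R) * (A - F * P * Fᴴ) *
          (fromRows (1 : Matrix m m R) (0 : Matrix n m R))ᴴ +
        fromRows F (1 : Matrix n n R) * P * (fromRows F (1 : Matrix n n R))ᴴ := by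
  rw [fromRows_mul_mul_conjTranspose_fromRows, fromRows_mul_mul_conjTranspose_fromRows,
    fromBlocks_add]
  simp

variable [Finite m] [PartialOrder R] {A : Matrix m m R} {F : Matrix m n R} {P : Matrix n n R}

theorem posSemidef_sub_of_posSemidef_fromBlocks {G : Matrix n n R}
    (h : (fromBlocks A (F * Gᴴ) (G * Fᴴ) (G + Gᴴ - P)).PosSemidef) :
    (A - F * P * Fᴴ).PosSemidef := by
  classical
  have := Fintype.ofFinite m
  rw [← fromCols_one_neg_mul_fromBlocks_mul_conjTranspose A F P G]
  exact h.mul_mul_conjTranspose_same _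

theorem posSemidef_fromBlocks_of_posSemidef_sub [AddLeftMono R] (hP : P.PosSemidef)
    (h : (A - F * P * Fᴴ).PosSemidef) :
    (fromBlocks A (F * Pᴴ) (P * Fᴴ) (P + Pᴴ - P)).PosSemidef := by
  classical
  have := Fintype.ofFinite m
  rw [add_sub_cancel_left, hP.isHermitian.eq, fromBlocks_eq_fromRows_conj_add_fromRows_conj]
  exact (h.mul_mul_conjTranspose_same _).add (hP.mul_mul_conjTranspose_same _)

theorem exists_posSemidef_fromBlocks_iff [AddLeftMono R] (hP : P.PosSemidef) :
    (∃ G : Matrix n n R, (fromBlocks A (F * Gᴴ) (G * Fᴴ) (G + Gᴴ - P)).PosSemidef) ↔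
      (A - F * P * Fᴴ).PosSemidef :=
  ⟨fun ⟨_, hG⟩ ↦ posSemidef_sub_of_posSemidef_fromBlocks hG,
    fun h ↦ ⟨P, posSemidef_fromBlocks_of_posSemidef_sub hP h⟩⟩

end SlackBlock

section GramComparison

variable {m n 𝕜 : Type*} [Field 𝕜] [PartialOrder 𝕜] [StarRing 𝕜] [StarOrderedRing 𝕜] {ρ : 𝕜}

theorem posSemidef_of_posSemidef_smul (hρ : 0 < ρ) {M : Matrix n n 𝕜}
    (h : (ρ • M).PosSemidef) : M.PosSemidef := by
  have inv_ρ_nonneg : 0 ≤ ρ⁻¹ := by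
    simpa [hρ.ne', (IsSelfAdjoint.of_nonneg hρ.le).star_eq] using
      star_left_conjugate_nonneg hρ.le ρ⁻¹
  simpa [smul_smul, hρ.ne'] using h.smul inv_ρ_nonneg

variable [Fintype m] [Fintype n] [DecidableEq m] [DecidableEq n]

theorem posSemidef_smul_one_sub_mul_conjTranspose (hρ : 0 < ρ) {F : Matrix m n 𝕜}
    (h : (ρ • (1 : Matrix n n 𝕜) - Fᴴ * F).PosSemidef) :
    (ρ • (1 : Matrix m m 𝕜) - F * Fᴴ).PosSemidef := by
  set D := ρ • (1 : Matrix m m 𝕜) - F * Fᴴ with hD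
  have conjTranspose_D : Dᴴ = D := by
    simp [hD, (IsSelfAdjoint.of_nonneg hρ.le).star_eq]
  have smul_eq : ρ • D = D * Dᴴ + F * (ρ • (1 : Matrix n n 𝕜) - Fᴴ * F) * Fᴴ := by
    rw [conjTranspose_D]
    simp [hD, Matrix.mul_sub, Matrix.sub_mul, Matrix.mul_assoc, smul_sub]
  refine posSemidef_of_posSemidef_smul hρ ?_
  rw [smul_eq]
  exact (posSemidef_self_mul_conjTranspose D).add (h.mul_mul_conjTranspose_same F)

theorem posSemidef_smul_one_sub_gram_comm (hρ : 0 < ρ) (F : Matrix m n 𝕜) :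
    (ρ • (1 : Matrix n n 𝕜) - Fᴴ * F).PosSemidef ↔
      (ρ • (1 : Matrix m m 𝕜) - F * Fᴴ).PosSemidef := by
  refine ⟨posSemidef_smul_one_sub_mul_conjTranspose hρ, fun h ↦ ?_⟩
  simpa using posSemidef_smul_one_sub_mul_conjTranspose (F := Fᴴ) hρ (by simpa using h)

theorem stmt17_general (F : Matrix m n 𝕜) (hρ : 0 < ρ) :
    ((∃ G : Matrix n n 𝕜,
        (fromBlocks (ρ • (1 : Matrix m m 𝕜)) (F * Gᴴ) (G * Fᴴ) (G + Gᴴ - 1)).PosSemidef) ↔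
      (ρ • (1 : Matrix n n 𝕜) - Fᴴ * F).PosSemidef) ∧
    ((ρ • (1 : Matrix n n 𝕜) - Fᴴ * F).PosSemidef ↔
      (ρ • (1 : Matrix m m 𝕜) - F * Fᴴ).PosSemidef) ∧
    ((ρ • (1 : Matrix n n 𝕜) - Fᴴ * F).PosSemidef →
      (fromBlocks (ρ • (1 : Matrix m m 𝕜)) (F * (1 : Matrix n n 𝕜)ᴴ) ((1 : Matrix n n 𝕜) * Fᴴ)
        ((1 : Matrix n n 𝕜) + (1 : Matrix n n 𝕜)ᴴ - 1)).PosSemidef) := by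
  have gram_comm := posSemidef_smul_one_sub_gram_comm hρ F
  refine ⟨?_, gram_comm, fun h ↦ ?_⟩
  · rw [exists_posSemidef_fromBlocks_iff .one, Matrix.mul_one, gram_comm]
  · refine posSemidef_fromBlocks_of_posSemidef_sub .one ?_
    rw [Matrix.mul_one]
    exact gram_comm.mp h

end GramComparison

theorem stmt17 {n m : ℕ} (F : Matrix (Fin m) (Fin n) ℝ) (ρ : ℝ) (hρ : 0 < ρ) :
    -- existence of `G` making the block matrix PSD iff `Fᵀ·F ⪯ ρ·Iₙ`
    ((∃ G : Matrix (Fin n) (Fin n) ℝ,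
        (Matrix.fromBlocks (ρ • (1 : Matrix (Fin m) (Fin m) ℝ)) (F * Gᵀ) (G * Fᵀ)
          (G + Gᵀ - (1 : Matrix (Fin n) (Fin n) ℝ))).PosSemidef) ↔
      (ρ • (1 : Matrix (Fin n) (Fin n) ℝ) - Fᵀ * F).PosSemidef) ∧
    -- equivalently, `F·Fᵀ ⪯ ρ·Iₘ`
    ((ρ • (1 : Matrix (Fin n) (Fin n) ℝ) - Fᵀ * F).PosSemidef ↔
      (ρ • (1 : Matrix (Fin m) (Fin m) ℝ) - F * Fᵀ).PosSemidef) ∧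
    -- in the forward direction one may take `G = Iₙ`
    ((ρ • (1 : Matrix (Fin n) (Fin n) ℝ) - Fᵀ * F).PosSemidef →
      (Matrix.fromBlocks (ρ • (1 : Matrix (Fin m) (Fin m) ℝ))
        (F * (1 : Matrix (Fin n) (Fin n) ℝ)ᵀ) ((1 : Matrix (Fin n) (Fin n) ℝ) * Fᵀ)
        ((1 : Matrix (Fin n) (Fin n) ℝ) + (1 : Matrix (Fin n) (Fin n) ℝ)ᵀ -
          (1 : Matrix (Fin n) (Fin n) ℝ))).PosSemidef) := by
  simpa only [conjTranspose_eq_transpose_of_trivial] using stmt17_general F hρ
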